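/- Let x_1, ..., x_p ∈ ℝ^d be linearly independent vectors and c > 0. Then for every matrix P ∈ ℝ^{p×p} with all entries strictly positive and each row summing to 1, there exists a matrix H' ∈ ℝ^{d×d} such that the softmax attention computed from H', namely A_{ij} = exp(c·x_iᵀH'x_j) / Σ_{r=1}^p exp(c·x_iᵀH'x_r), satisfies A_{ij} = P_{ij} for all i, j ∈ {1,...,p}. That is, full fine-tuning can change the attention pattern over linearly independent inputs to any strictly positive row-stochastic matrix. -/

import Mathlib

open Matrix Real

/-!
Over linearly independent queries and keys a bilinear form may take any prescribed values, so every
matrix of attention scores is realizable. Since softmax inverts the entrywise logarithm on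
probability vectors, the scores `log (P i j) / c` produce the attention pattern `P`.
-/

section Interpolation

variable {ι κ K V W U : Type*} [AddCommGroup V] [AddCommGroup W] [AddCommGroup U]

theorem exists_linearMap_apply_eq_of_linearIndependent [DivisionRing K] [Module K V] [Module K U]
    {v : ι → V} (hv : LinearIndependent K v) (u : ι → U) :
    ∃ f : V →ₗ[K] U, ∀ i, f (v i) = u i := by
  obtain ⟨f, hf⟩ := ((Module.Basis.span hv).constr ℕ u).exists_extend
  refine ⟨f, fun i => ?_⟩
  calc f (v i) = (f ∘ₗ (Submodule.span K (Set.range v)).subtype) (Module.Basis.span hv i) := by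
        rw [LinearMap.comp_apply, Submodule.subtype_apply, Module.Basis.span_apply]
    _ = u i := by rw [hf, Module.Basis.constr_basis]

theorem exists_bilinearMap_apply_eq_of_linearIndependent [Field K] [Module K V] [Module K W]
    [Module K U] {v : ι → V} {w : κ → W} (hv : LinearIndependent K v) (hw : LinearIndependent K w)
    (M : ι → κ → U) :
    ∃ B : V →ₗ[K] W →ₗ[K] U, ∀ i j, B (v i) (w j) = M i j := by
  choose f hf using fun i => exists_linearMap_apply_eq_of_linearIndependent hw (M i)
  obtain ⟨B, hB⟩ := exists_linearMap_apply_eq_of_linearIndependent hv f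
  exact ⟨B, fun i j => by rw [hB, hf]⟩

end Interpolation

section Softmax

variable {ι : Type*} [Fintype ι]

/-- The softmax of a finite family of real scores: the weights turning each row of attention scores
into a row of the attention matrix. -/
noncomputable def softmax (z : ι → ℝ) (i : ι) : ℝ :=
  exp (z i) / ∑ j, exp (z j)

theorem softmax_log {p : ι → ℝ} (hp : ∀ i, 0 < p i) (i : ι) :
    softmax (fun j => log (p j)) i = p i / ∑ j, p j := by
  simp only [softmax, exp_log (hp _)]

end Softmax

theorem full_finetuning_realizes_arbitrary_attention_general {ι κ V W : Type*} [Fintype κ]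
    [AddCommGroup V] [Module ℝ V] [AddCommGroup W] [Module ℝ W] {c : ℝ} (hc : c ≠ 0)
    {v : ι → V} {w : κ → W} (hv : LinearIndependent ℝ v) (hw : LinearIndependent ℝ w)
    {P : Matrix ι κ ℝ} (hPpos : ∀ i j, 0 < P i j) (hProw : ∀ i, ∑ j, P i j = 1) :
    ∃ B : V →ₗ[ℝ] W →ₗ[ℝ] ℝ, ∀ i j, softmax (fun r => c * B (v i) (w r)) j = P i j := by
  obtain ⟨B, hB⟩ :=
    exists_bilinearMap_apply_eq_of_linearIndependent hv hw fun i j => log (P i j) / c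
  refine ⟨B, fun i j => ?_⟩
  calc softmax (fun r => c * B (v i) (w r)) j = softmax (fun r => log (P i r)) j := by
        simp only [hB, mul_div_cancel₀ _ hc]
    _ = P i j := by rw [softmax_log (hPpos i), hProw, div_one]

/-- **Full fine-tuning can realize arbitrary strictly positive attention patterns.**
If `x_1, ..., x_p ∈ ℝ^d` are linearly independent and `c > 0`, then for every strictly positive
row-stochastic matrix `P ∈ ℝ^{p×p}` there exists `H' ∈ ℝ^{d×d}` such that the softmax attention
computed from `H'` equals `P`. -/
theorem full_finetuning_realizes_arbitrary_attention {d p : ℕ} (c : ℝ) (hc : 0 < c)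
    (x : Fin p → Fin d → ℝ) (hx : LinearIndependent ℝ x)
    (P : Matrix (Fin p) (Fin p) ℝ) (hPpos : ∀ i j, 0 < P i j)
    (hProw : ∀ i, ∑ j, P i j = 1) :
    ∃ H' : Matrix (Fin d) (Fin d) ℝ, ∀ i j : Fin p,
      exp (c * (x i ⬝ᵥ H'.mulVec (x j))) / (∑ r, exp (c * (x i ⬝ᵥ H'.mulVec (x r)))) = P i j := by
  obtain ⟨B, hB⟩ := full_finetuning_realizes_arbitrary_attention_general hc.ne' hx hx hPpos hProw
  exact ⟨LinearMap.toMatrix₂' ℝ B, by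
    simpa only [softmax, ← toLinearMap₂'_apply', toLinearMap₂'_toMatrix'] using hB⟩
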